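/- Let S be a numerical semigroup with msg(S) = {n₁ < n₂ < ⋯ < n_e < n_{e+1}}, e ≥ 2, let S' = ⟨n₁, n₂, …, n_e⟩, and write Ap(S', n₁) = {w'(0), w'(1), …, w'(n₁−1)}. Then S is a MANS-semigroup if and only if: (1) S' is a MANS-semigroup, (2) n_e mod n₁ < n_{e+1} mod n₁, and (3) w'((n_{e+1} mod n₁) − 1) < n_{e+1} < w'(n_{e+1} mod n₁). -/

import Mathlib

/-- `S ⊆ ℕ` is a numerical semigroup: contains `0`, closed under addition,
and has finite complement in `ℕ`. -/
def IsNumSgp (S : Set ℕ) : Prop :=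
  0 ∈ S ∧ (∀ a ∈ S, ∀ b ∈ S, a + b ∈ S) ∧ Sᶜ.Finite

/-- `⟨A⟩`: the additive submonoid of `ℕ` generated by `A`, viewed as a set. -/
def gen (A : Set ℕ) : Set ℕ := (AddSubmonoid.closure A : Set ℕ)

/-- The multiplicity `m(S)`: the least nonzero element of `S`. -/
noncomputable def nsMult (S : Set ℕ) : ℕ := sInf {x | x ∈ S ∧ x ≠ 0}

/-- The minimal system of generators of `S`: the nonzero elements of `S` that are
not a sum of two nonzero elements of `S`. -/
def msg (S : Set ℕ) : Set ℕ :=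
  {x | x ∈ S ∧ x ≠ 0 ∧ ∀ a ∈ S, a ≠ 0 → ∀ b ∈ S, b ≠ 0 → x ≠ a + b}

/-- The ratio `r(S)`: the second smallest minimal generator of `S`. -/
noncomputable def nsRatio (S : Set ℕ) : ℕ := sInf (msg S \ {nsMult S})

/-- The maximum minimal generator `M(S)`. -/
noncomputable def nsMaxGen (S : Set ℕ) : ℕ := sSup (msg S)

/-- The Apéry set `Ap(S, n) = {s ∈ S : s - n ∉ S}`. -/
def AperySet (S : Set ℕ) (n : ℕ) : Set ℕ :=
  {s | s ∈ S ∧ ¬ ∃ y ∈ S, y + n = s}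

/-- `w(i)`: the least element of `S` congruent to `i` modulo `n`. -/
noncomputable def aperyW (S : Set ℕ) (n i : ℕ) : ℕ :=
  sInf {s | s ∈ S ∧ s % n = i % n}

/-- A MANS-semigroup: a numerical semigroup whose Apéry set with respect to the
multiplicity is monotone, i.e. `w(1) < w(2) < ⋯ < w(m(S) - 1)`. -/
def IsMANS (S : Set ℕ) : Prop :=
  IsNumSgp S ∧ ∀ i : ℕ, 0 < i → i + 1 < nsMult S →
    aperyW S (nsMult S) i < aperyW S (nsMult S) (i + 1)

/-- The Frobenius number `F(S)`: the greatest integer not in `S`. -/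
noncomputable def nsFrob (S : Set ℕ) : ℕ := sSup {x | x ∉ S}

/-- The genus `g(S)`: the number of gaps of `S`. -/
noncomputable def nsGenus (S : Set ℕ) : ℕ := Set.ncard {x | x ∉ S}

/-- The set of pseudo-Frobenius numbers of `S`: integers `x ∉ S` such that
`x + s ∈ S` for every nonzero `s ∈ S`. -/
def nsPF (S : Set ℕ) : Set ℤ :=
  {x : ℤ | x ∉ ((Nat.cast : ℕ → ℤ) '' S) ∧
    ∀ s ∈ S, s ≠ 0 → x + (s : ℤ) ∈ ((Nat.cast : ℕ → ℤ) '' S)}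

/-- The type `t(S)`: the number of pseudo-Frobenius numbers of `S`. -/
noncomputable def nsType (S : Set ℕ) : ℕ := (nsPF S).ncard

/-- `S` is pseudo-symmetric iff `F(S) = 2 g(S) - 2`. -/
def IsPseudoSymmetric (S : Set ℕ) : Prop :=
  (nsFrob S : ℤ) = 2 * (nsGenus S : ℤ) - 2

/-- Descent property. -/
def Desc (S : Set ℕ) (m : ℕ) : Prop :=
  ∀ s ∈ S, s % m ≠ 0 → ∃ y ∈ S, y < s ∧ (y + 1) ≡ s [MOD m]

theorem pred_mod {m y s : ℕ} (hm : 0 < m) (h : (y + 1) ≡ s [MOD m]) (hs : s % m ≠ 0) :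
    y % m + 1 = s % m := by
  unfold Nat.ModEq at h
  have h1 := Nat.mod_lt y hm
  have h2 : (y + 1) % m = (y % m + 1) % m := by simp
  rcases Nat.lt_or_ge (y % m + 1) m with h3 | h3
  · rw [Nat.mod_eq_of_lt h3] at h2; omega
  · have : y % m + 1 = m := by omega
    rw [this, Nat.mod_self] at h2; omega

theorem desc_of_gen (A : Set ℕ) (m : ℕ)
    (h : ∀ s ∈ A, s % m ≠ 0 → ∃ y ∈ gen A, y < s ∧ (y + 1) ≡ s [MOD m]) : Desc (gen A) m := by
  intro s hs
  change s ∈ AddSubmonoid.closure A at hs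
  induction hs using AddSubmonoid.closure_induction with
  | mem x hx => exact h x hx
  | zero => intro h0; simp at h0
  | add a b ha hb iha ihb =>
    intro hab
    by_cases h0 : a % m = 0
    · have hb0 : b % m ≠ 0 := by
        intro hb0; apply hab; simp [Nat.add_mod, h0, hb0]
      obtain ⟨y, hy, hlt, hc⟩ := ihb hb0
      refine ⟨a + y, AddSubmonoid.add_mem _ ha hy, by omega, ?_⟩
      rw [add_assoc]; exact hc.add_left a
    · obtain ⟨y, hy, hlt, hc⟩ := iha h0
      refine ⟨y + b, AddSubmonoid.add_mem _ hy hb, by omega, ?_⟩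
      have := hc.add_right b
      rwa [add_right_comm] at this

theorem apery_le {S : Set ℕ} {m i s : ℕ} (hs : s ∈ S) (h : s % m = i % m) : aperyW S m i ≤ s :=
  Nat.sInf_le ⟨hs, h⟩

theorem apery_mem {S : Set ℕ} (hS : IsNumSgp S) {m : ℕ} (hm : 0 < m) (i : ℕ) :
    aperyW S m i ∈ S ∧ aperyW S m i % m = i % m := by
  have hne : {s | s ∈ S ∧ s % m = i % m}.Nonempty := by
    obtain ⟨B, hB⟩ := hS.2.2.bddAbove
    refine ⟨i + m * (B + 1), ?_, by simp⟩
    by_contra hc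
    have := hB hc
    nlinarith
  exact Nat.sInf_mem hne

theorem mans_iff {S : Set ℕ} (hS : IsNumSgp S) {m : ℕ} (hm : 0 < m) (hmS : nsMult S = m) :
    IsMANS S ↔ Desc S m := by
  unfold IsMANS
  rw [hmS]
  constructor
  · rintro ⟨_, h⟩ s hs hs0
    have hlt := Nat.mod_lt s hm
    by_cases h1 : s % m = 1
    · refine ⟨0, hS.1, ?_, ?_⟩
      · rcases Nat.eq_zero_or_pos s with h | h
        · simp [h] at hs0
        · exact h
      · change _ % _ = _
        rw [h1]; exact Nat.mod_eq_of_lt (by omega)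
    · have h2 := h (s % m - 1) (by omega) (by omega)
      have e1 : s % m - 1 + 1 = s % m := by omega
      rw [e1] at h2
      have h3 := apery_mem hS hm (s % m - 1)
      refine ⟨_, h3.1, lt_of_lt_of_le h2 (apery_le hs (by simp)), ?_⟩
      have h4 : aperyW S m (s % m - 1) ≡ s % m - 1 [MOD m] := h3.2
      have := h4.add_right 1
      rw [e1] at this
      exact this.trans (Nat.mod_modEq _ _)
  · intro h
    refine ⟨hS, fun i hi him => ?_⟩
    obtain ⟨h1, h2⟩ := apery_mem hS hm (i + 1)
    have h3 : (i + 1) % m = i + 1 := Nat.mod_eq_of_lt him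
    have h4 : aperyW S m (i + 1) % m ≠ 0 := by omega
    obtain ⟨y, hy, hlt, hc⟩ := h _ h1 h4
    have := pred_mod hm hc h4
    refine lt_of_le_of_lt (apery_le hy ?_) hlt
    rw [Nat.mod_eq_of_lt (by omega : i < m)]; omega

theorem desc_down {S : Set ℕ} {m : ℕ} (hm : 0 < m) (h : Desc S m) (k : ℕ) :
    ∀ s ∈ S, k ≤ s % m → ∃ y ∈ S, y ≤ s ∧ y % m = k := by
  intro s
  induction s using Nat.strong_induction_on with
  | _ s ih =>
    intro hs hk
    by_cases h0 : s % m = k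
    · exact ⟨s, hs, le_rfl, h0⟩
    · have h1 : s % m ≠ 0 := by omega
      obtain ⟨y, hy, hlt, hc⟩ := h s hs h1
      have := pred_mod hm hc h1
      obtain ⟨z, hz, hzl, hzm⟩ := ih y hlt hy (by omega)
      exact ⟨z, hz, by omega, hzm⟩

theorem numSgp_of_one {A : Set ℕ} {m a : ℕ} (hm : 0 < m) (hmA : m ∈ gen A) (ha : a ∈ gen A)
    (h1 : a ≡ 1 [MOD m]) : IsNumSgp (gen A) := by
  refine ⟨AddSubmonoid.zero_mem _, fun a ha b hb => AddSubmonoid.add_mem _ ha hb, ?_⟩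
  refine (Set.finite_Iio (m * a)).subset ?_
  intro N hN
  by_contra hc
  apply hN
  have hge : m * a ≤ N := by simpa using hc
  have hle : (N % m) * a ≤ N :=
    (Nat.mul_le_mul_right a (Nat.mod_lt N hm).le).trans hge
  have hmod : (N % m) * a ≡ N [MOD m] := by
    have := (Nat.mod_modEq N m).mul h1
    rwa [mul_one] at this
  obtain ⟨t, ht⟩ := (Nat.modEq_iff_dvd' hle).1 hmod
  have : N = (N % m) • a + t • m := by
    simp only [smul_eq_mul]; rw [mul_comm t m]; omega
  rw [this]
  exact AddSubmonoid.add_mem _ (AddSubmonoid.nsmul_mem _ ha _) (AddSubmonoid.nsmul_mem _ hmA _)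

theorem mem_gen_of_msg {S A : Set ℕ} (B : ℕ) (hA : ∀ x ∈ msg S, x < B → x ∈ A) :
    ∀ s ∈ S, s < B → s ∈ gen A := by
  intro s
  induction s using Nat.strong_induction_on with
  | _ s ih =>
    intro hs hB
    by_cases h0 : s = 0
    · rw [h0]; exact AddSubmonoid.zero_mem _
    by_cases hm : s ∈ msg S
    · exact AddSubmonoid.subset_closure (hA s hm hB)
    · have : ∃ a ∈ S, a ≠ 0 ∧ ∃ b ∈ S, b ≠ 0 ∧ s = a + b := by
        by_contra hc
        apply hm
        refine ⟨hs, h0, fun a ha ha0 b hb hb0 he => hc ⟨a, ha, ha0, b, hb, hb0, he⟩⟩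
      obtain ⟨a, ha, ha0, b, hb, hb0, he⟩ := this
      rw [he]
      exact AddSubmonoid.add_mem _ (ih a (by omega) ha (by omega)) (ih b (by omega) hb (by omega))

theorem msg_apery {S : Set ℕ} (hS : IsNumSgp S) {m g y : ℕ} (hmS : m ∈ S) (hm : 0 < m)
    (hg : g ∈ msg S) (hlt : m < g) (hy : y ∈ S) (hle : y ≤ g) (hmod : y % m = g % m) : y = g := by
  obtain ⟨t, ht⟩ := (Nat.modEq_iff_dvd' hle).1 hmod
  by_contra hne
  have key : ∀ k : ℕ, k * m ∈ S := by
    intro k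
    induction k with
    | zero => simpa using hS.1
    | succ k ih => rw [Nat.succ_mul]; exact hS.2.1 _ ih _ hmS
  have ht0 : t ≠ 0 := by rintro rfl; simp at ht; omega
  obtain ⟨u, rfl⟩ := Nat.exists_eq_succ_of_ne_zero ht0
  have hgm : g = m + (y + u * m) := by
    have : m * (u + 1) = m + u * m := by ring
    simp only [Nat.succ_eq_add_one] at ht
    omega
  exact hg.2.2 m hmS hm.ne' (y + u * m) (hS.2.1 _ hy _ (key u)) (by omega) hgm

theorem stmt18 (S : Set ℕ) (e : ℕ) (he : 2 ≤ e) (n : Fin (e + 1) → ℕ)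
    (hS : IsNumSgp S) (hmono : StrictMono n) (hmsg : msg S = Set.range n)
    (S' : Set ℕ) (hS' : S' = gen (Set.range fun i : Fin e => n i.castSucc)) :
    IsMANS S ↔
      IsMANS S' ∧
      n ⟨e - 1, by omega⟩ % n 0 < n ⟨e, by omega⟩ % n 0 ∧
      aperyW S' (n 0) (n ⟨e, by omega⟩ % n 0 - 1) < n ⟨e, by omega⟩ ∧
      n ⟨e, by omega⟩ < aperyW S' (n 0) (n ⟨e, by omega⟩ % n 0) := by
  have hmem : ∀ i, n i ∈ msg S := fun i => hmsg ▸ Set.mem_range_self i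
  have hg1 : n ⟨e - 1, by omega⟩ < n ⟨e, by omega⟩ := hmono (by
    rw [Fin.lt_def]; simp only; omega)
  have hg1m := hmem ⟨e - 1, by omega⟩
  have hmM : n 0 < n ⟨e, by omega⟩ := hmono (by
    rw [Fin.lt_def]; simp; omega)
  have hm1 : n 0 < n ⟨1, by omega⟩ := hmono (by
    rw [Fin.lt_def]; simp)
  have hMm := hmem ⟨e, by omega⟩
  have h0m := hmem 0
  have h1m := hmem ⟨1, by omega⟩
  have h1M : n ⟨1, by omega⟩ < n ⟨e, by omega⟩ := hmono (by
    rw [Fin.lt_def]; simp only; omega)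
  have hmin : ∀ x ∈ msg S, n 0 ≤ x := by
    rw [hmsg]; rintro _ ⟨i, rfl⟩; exact hmono.monotone (Fin.zero_le i)
  have hmax : ∀ x ∈ msg S, x ≤ n ⟨e, by omega⟩ := by
    rw [hmsg]; rintro _ ⟨i, rfl⟩; exact hmono.monotone (Fin.le_last i)
  have hA : (Set.range fun i : Fin e => n i.castSucc) = {x | x ∈ msg S ∧ x < n ⟨e, by omega⟩} := by
    rw [hmsg]
    ext x
    constructor
    · rintro ⟨i, rfl⟩
      exact ⟨⟨_, rfl⟩, hmono (by rw [Fin.lt_def]; exact i.2)⟩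
    · rintro ⟨⟨i, rfl⟩, hi⟩
      have := hmono.lt_iff_lt.1 hi
      rw [Fin.lt_def] at this
      exact ⟨⟨i.1, this⟩, rfl⟩
  rw [hA] at hS'
  generalize n ⟨e, by omega⟩ = M at *
  generalize n ⟨e - 1, by omega⟩ = g at *
  generalize n ⟨1, by omega⟩ = p at *
  generalize n 0 = m at *
  clear hA hmsg hmem hmono
  have hm : 0 < m := Nat.pos_of_ne_zero h0m.2.1
  have hlow : ∀ s ∈ S, s < M → s ∈ S' := by
    rw [hS']; exact mem_gen_of_msg M (fun x hx hl => ⟨hx, hl⟩)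
  have hSgen : S = gen (msg S) := by
    apply Set.Subset.antisymm
    · intro s hs
      exact mem_gen_of_msg (s + 1) (fun x hx _ => hx) s hs (by omega)
    · intro s hs
      have : AddSubmonoid.closure (msg S) ≤ ⟨⟨S, fun ha hb => hS.2.1 _ ha _ hb⟩, hS.1⟩ :=
        (AddSubmonoid.closure_le).2 (fun x hx => hx.1)
      exact this hs
  have hsub : ∀ s ∈ S', s ∈ S ∧ s ≠ M := by
    intro s hs
    rw [hS'] at hs
    change s ∈ AddSubmonoid.closure _ at hs
    induction hs using AddSubmonoid.closure_induction with
    | mem x hx => exact ⟨hx.1.1, hx.2.ne⟩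
    | zero => exact ⟨hS.1, by omega⟩
    | add a b _ _ iha ihb =>
      refine ⟨hS.2.1 _ iha.1 _ ihb.1, fun hab => ?_⟩
      by_cases ha : a = 0
      · apply ihb.2; omega
      by_cases hb : b = 0
      · apply iha.2; omega
      exact hMm.2.2 a iha.1 ha b ihb.1 hb hab.symm
  have hge : ∀ s ∈ S, s ≠ 0 → m ≤ s := by
    intro s hs
    rw [hSgen] at hs
    change s ∈ AddSubmonoid.closure _ at hs
    induction hs using AddSubmonoid.closure_induction with
    | mem x hx => intro _; exact hmin x hx
    | zero => intro h; exact absurd rfl h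
    | add a b _ _ iha ihb => intro h; by_cases ha : a = 0
                             · have := ihb (by omega); omega
                             · have := iha ha; omega
  have hmS' := hlow m h0m.1 hmM
  have hmul : nsMult S = m := le_antisymm (Nat.sInf_le ⟨h0m.1, hm.ne'⟩)
    (le_csInf ⟨m, h0m.1, hm.ne'⟩ (fun s hs => hge s hs.1 hs.2))
  have hmul' : nsMult S' = m := le_antisymm (Nat.sInf_le ⟨hmS', hm.ne'⟩)
    (le_csInf ⟨m, hmS', hm.ne'⟩ (fun s hs => hge s (hsub s hs.1).1 hs.2))
  have hnz : ∀ x ∈ msg S, m < x → x % m ≠ 0 := by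
    intro x hx hl h0
    have := msg_apery hS h0m.1 hm hx hl hS.1 (Nat.zero_le _) (by simp [h0])
    omega
  have hr := hnz M hMm hmM
  have hrlt := Nat.mod_lt M hm
  rw [mans_iff hS hm hmul]
  constructor
  · intro hD
    have hD' : Desc S' m := by
      rw [hS']
      apply desc_of_gen
      rintro s ⟨hs, hl⟩ hs0
      obtain ⟨y, hy, hlt, hc⟩ := hD s hs.1 hs0
      exact ⟨y, hS' ▸ hlow y hy (hlt.trans hl), hlt, hc⟩
    have hp := hnz p h1m hm1
    obtain ⟨a, ha, _, ha1⟩ := desc_down hm hD' 1 p (hlow p h1m.1 h1M) (by omega)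
    have hN : IsNumSgp S' := by
      rw [hS'] at ha hmS' ⊢
      have hpm := Nat.mod_lt p hm
      refine numSgp_of_one hm hmS' ha ?_
      change a % m = 1 % m
      rw [ha1, Nat.mod_eq_of_lt]
      have := Nat.mod_lt a hm
      omega
    refine ⟨(mans_iff hN hm hmul').2 hD', ?_, ?_, ?_⟩
    · by_contra hc
      obtain ⟨y, hy, hyg, hym⟩ := desc_down hm hD (M % m) g hg1m.1 (by omega)
      have := msg_apery hS h0m.1 hm hMm hmM hy (by omega) hym
      omega
    · obtain ⟨y, hy, hlt, hc⟩ := hD M hMm.1 hr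
      have := pred_mod hm hc hr
      refine lt_of_le_of_lt (apery_le (hlow y hy hlt) ?_) hlt
      rw [Nat.mod_eq_of_lt (by omega : M % m - 1 < m)]; omega
    · obtain ⟨h1, h2⟩ := apery_mem hN hm (M % m)
      by_contra hc
      obtain ⟨h3, h4⟩ := hsub _ h1
      exact h4 (msg_apery hS h0m.1 hm hMm hmM h3 (by omega) (by simpa using h2))
  · rintro ⟨hM', -, h3, -⟩
    have hN := hM'.1
    have hD' := (mans_iff hN hm hmul').1 hM'
    have hG : Desc (gen (msg S)) m := by
      apply desc_of_gen
      rw [← hSgen]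
      intro s hs hs0
      rcases (hmax s hs).lt_or_eq with hl | rfl
      · obtain ⟨y, hy, hlt, hc⟩ := hD' s (hlow s hs.1 hl) hs0
        exact ⟨y, (hsub y hy).1, hlt, hc⟩
      · obtain ⟨h1, h2⟩ := apery_mem hN hm (s % m - 1)
        refine ⟨_, (hsub _ h1).1, h3, ?_⟩
        have h4 : aperyW S' m (s % m - 1) ≡ s % m - 1 [MOD m] := h2
        have h5 := h4.add_right 1
        rw [show s % m - 1 + 1 = s % m by omega] at h5
        exact h5.trans (Nat.mod_modEq _ _)
    rwa [← hSgen] at hG
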